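/- arXiv:2009.13073 — 2 statements merged into one kernel-verified Lean document; each statement's English description precedes it below -/
import Mathlib

section
/- Let v, y, η ∈ ℝ^d, and let δ₁, δ₂ be real numbers with δ₂ > 0 and δ₁ − 1/2 + δ₂/2 ≤ 0. Set A = 1 + |v|² + |η|² + |v∧η|² and B = 1 + |v|² + |y|² + |v∧y|². If A ≤ B^{δ₂}, then B^{δ₁−1} · |⟨y,η⟩ + (v∧y)·(v∧η)| ≤ 1. -/
open scoped RealInnerProductSpace

/-!
For fixed `v` the bilinear form `Q(y, η) = ⟨y,η⟩ + (v∧y)·(v∧η)` is symmetric and positive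
semidefinite, so Cauchy–Schwarz gives `Q(y, η)² ≤ Q(y, y) Q(η, η) ≤ B A ≤ B^(1 + δ₂)`.
Hence `B^(δ₁ - 1) |Q(y, η)| ≤ B^(δ₁ - 1/2 + δ₂/2)`, which is at most `1` because `B ≥ 1` and the
exponent is nonpositive.
-/

section SmoothingForm

variable {E : Type*} [SeminormedAddCommGroup E] [InnerProductSpace ℝ E]

/-- The bilinear form `(y, η) ↦ (v∧y)·(v∧η)`, the inner product of bivectors expanded by the
Gram determinant as `|v|²⟨y,η⟩ − ⟨v,y⟩⟨v,η⟩`. -/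
noncomputable def wedgeForm (v : E) : LinearMap.BilinForm ℝ E :=
  ‖v‖ ^ 2 • innerₗ E - LinearMap.BilinForm.linMulLin (innerₗ E v) (innerₗ E v)

/-- The bilinear form `(y, η) ↦ ⟨y,η⟩ + (v∧y)·(v∧η)`, which is the symbol `θ(v,η)` up to the
factor `B^(δ₁ - 1)` and the cutoff. -/
noncomputable def smoothingForm (v : E) : LinearMap.BilinForm ℝ E :=
  innerₗ E + wedgeForm v

/-- The weight `1 + |v|² + |x|² + |v∧x|²`, which is `A` at `x = η` and `B` at `x = y`. -/
noncomputable def wedgeWeight (v x : E) : ℝ :=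
  1 + ‖v‖ ^ 2 + ‖x‖ ^ 2 + wedgeForm v x x

lemma wedgeForm_apply (v y η : E) :
    wedgeForm v y η = ‖v‖ ^ 2 * ⟪y, η⟫ - ⟪v, y⟫ * ⟪v, η⟫ := rfl

lemma wedgeForm_self (v x : E) : wedgeForm v x x = ‖v‖ ^ 2 * ‖x‖ ^ 2 - ⟪v, x⟫ ^ 2 := by
  rw [wedgeForm_apply, real_inner_self_eq_norm_sq, ← sq]

lemma wedgeForm_self_nonneg (v x : E) : 0 ≤ wedgeForm v x x := by
  have cauchy_schwarz : ⟪v, x⟫ * ⟪v, x⟫ ≤ ⟪v, v⟫ * ⟪x, x⟫ := real_inner_mul_inner_self_le v x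
  rw [wedgeForm_apply, ← real_inner_self_eq_norm_sq]
  exact sub_nonneg.mpr cauchy_schwarz

lemma smoothingForm_apply (v y η : E) : smoothingForm v y η = ⟪y, η⟫ + wedgeForm v y η := rfl

lemma smoothingForm_self (v x : E) : smoothingForm v x x = ‖x‖ ^ 2 + wedgeForm v x x := by
  rw [smoothingForm_apply, real_inner_self_eq_norm_sq]

lemma smoothingForm_isSymm (v : E) : LinearMap.IsSymm (smoothingForm v) := by
  refine ⟨fun y η ↦ ?_⟩
  simp only [smoothingForm_apply, wedgeForm_apply, real_inner_comm η y, RingHom.id_apply,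
    mul_comm ⟪v, y⟫]

lemma smoothingForm_self_nonneg (v x : E) : 0 ≤ smoothingForm v x x := by
  rw [smoothingForm_self]
  exact add_nonneg (sq_nonneg _) (wedgeForm_self_nonneg v x)

lemma smoothingForm_self_le_wedgeWeight (v x : E) : smoothingForm v x x ≤ wedgeWeight v x := by
  rw [smoothingForm_self, wedgeWeight]
  linarith [sq_nonneg ‖v‖]

lemma one_le_wedgeWeight (v x : E) : 1 ≤ wedgeWeight v x := by
  rw [wedgeWeight]
  linarith [sq_nonneg ‖v‖, sq_nonneg ‖x‖, wedgeForm_self_nonneg v x]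

lemma smoothingForm_sq_le_wedgeWeight_mul (v y η : E) :
    smoothingForm v y η ^ 2 ≤ wedgeWeight v y * wedgeWeight v η :=
  calc smoothingForm v y η ^ 2
      ≤ smoothingForm v y y * smoothingForm v η η :=
        (smoothingForm v).apply_sq_le_of_symm (smoothingForm_self_nonneg v)
          (smoothingForm_isSymm v) y η
    _ ≤ wedgeWeight v y * wedgeWeight v η :=
        mul_le_mul (smoothingForm_self_le_wedgeWeight v y) (smoothingForm_self_le_wedgeWeight v η)
          (smoothingForm_self_nonneg v η) (zero_le_one.trans (one_le_wedgeWeight v y))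

end SmoothingForm

lemma rpow_mul_abs_le_rpow_of_sq_le {b q r t : ℝ} (hb : 0 < b) (hq : q ^ 2 ≤ b ^ t) :
    b ^ r * |q| ≤ b ^ (r + t / 2) := by
  have hq_abs : |q| ≤ b ^ (t / 2) := by
    rw [← mul_one_div, Real.rpow_mul hb.le, ← Real.sqrt_eq_rpow]
    exact Real.abs_le_sqrt hq
  rw [Real.rpow_add hb]
  gcongr

theorem stmt_4_general {E : Type*} [SeminormedAddCommGroup E] [InnerProductSpace ℝ E]
    (v y η : E) {δ₁ δ₂ : ℝ} (hδ : δ₁ - 1 / 2 + δ₂ / 2 ≤ 0)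
    (hsupp : wedgeWeight v η ≤ wedgeWeight v y ^ δ₂) :
    wedgeWeight v y ^ (δ₁ - 1) * |smoothingForm v y η| ≤ 1 := by
  have one_le_B : 1 ≤ wedgeWeight v y := one_le_wedgeWeight v y
  have B_pos : 0 < wedgeWeight v y := zero_lt_one.trans_le one_le_B
  have form_sq_le : smoothingForm v y η ^ 2 ≤ wedgeWeight v y ^ (1 + δ₂) :=
    calc smoothingForm v y η ^ 2
        ≤ wedgeWeight v y * wedgeWeight v η := smoothingForm_sq_le_wedgeWeight_mul v y η
      _ ≤ wedgeWeight v y * wedgeWeight v y ^ δ₂ := by gcongr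
      _ = wedgeWeight v y ^ (1 + δ₂) := by rw [Real.rpow_add B_pos, Real.rpow_one]
  calc wedgeWeight v y ^ (δ₁ - 1) * |smoothingForm v y η|
      ≤ wedgeWeight v y ^ (δ₁ - 1 + (1 + δ₂) / 2) :=
        rpow_mul_abs_le_rpow_of_sq_le B_pos form_sq_le
    _ ≤ 1 := Real.rpow_le_one_of_one_le_of_nonpos one_le_B (by linarith)

/-- Zeroth-order bound `|θ| ≤ 1` on the support of the cutoff:
if `A ≤ B^δ₂` and `δ₁ − 1/2 + δ₂/2 ≤ 0`, then
`B^{δ₁−1}·|⟨y,η⟩ + (v∧y)·(v∧η)| ≤ 1`. -/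
theorem stmt_4 (d : ℕ) (v y η : EuclideanSpace ℝ (Fin d)) (δ₁ δ₂ : ℝ)
    (hδ₂ : 0 < δ₂) (hδ : δ₁ - 1 / 2 + δ₂ / 2 ≤ 0)
    (A B : ℝ)
    (hA : A = 1 + ‖v‖ ^ 2 + ‖η‖ ^ 2 + (‖v‖ ^ 2 * ‖η‖ ^ 2 - ⟪v, η⟫ ^ 2))
    (hB : B = 1 + ‖v‖ ^ 2 + ‖y‖ ^ 2 + (‖v‖ ^ 2 * ‖y‖ ^ 2 - ⟪v, y⟫ ^ 2))
    (hsupp : A ≤ B ^ δ₂) :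
    B ^ (δ₁ - 1) * |⟪y, η⟫ + (‖v‖ ^ 2 * ⟪y, η⟫ - ⟪v, y⟫ * ⟪v, η⟫)| ≤ 1 := by
  rw [← wedgeForm_self] at hA hB
  subst hA hB
  exact stmt_4_general v y η hδ hsupp
end

section
/- Let s ∈ (0,1), γ ∈ ℝ with γ + 2s > 0, and K₀ ≥ 1. Define a(v,η) = ⟨v⟩^γ (1 + |v|² + |η|² + |v∧η|²)^s + K₀⟨v⟩^{γ+2s} for v, η ∈ ℝ^d. Then for every l ≥ 0 and k ≥ 0 there exists P ≥ 0 such that ⟨v⟩^l · ⟨η⟩^k ≤ a(v,η)^P for all v, η ∈ ℝ^d. -/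
open scoped RealInnerProductSpace

/-!
By Cauchy–Schwarz `|v∧η|² ≥ 0`, so `1 + |v|² + |η|² + |v∧η|²` dominates both `⟨v⟩²` and `⟨η⟩²`, and
the symbol `a` dominates both `⟨v⟩^(γ+2s)` and `⟨v⟩^γ ⟨η⟩^(2s)`. The first bound controls `⟨v⟩` by
a power of `a`. When `γ < 0` the second one degenerates for large `v`, but the factor `⟨v⟩^γ` can
be moved to the other side and absorbed by the first bound, which leaves `⟨η⟩^(2s)` below a power
of `a`.
-/

section Scalar

variable {x y a α β γ ρ l k : ℝ}

lemma rpow_le_rpow_mul_of_le_rpow (hx : 0 ≤ x) (ha : 0 ≤ a) (hxa : x ≤ a ^ α) (hl : 0 ≤ l) :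
    x ^ l ≤ a ^ (α * l) := by
  rw [Real.rpow_mul ha]
  exact Real.rpow_le_rpow hx hxa hl

lemma rpow_mul_rpow_le_rpow_add (hx : 0 ≤ x) (hy : 0 ≤ y) (ha : 0 < a) (hxa : x ≤ a ^ α)
    (hya : y ≤ a ^ β) (hl : 0 ≤ l) (hk : 0 ≤ k) :
    x ^ l * y ^ k ≤ a ^ (α * l + β * k) := by
  rw [Real.rpow_add ha]
  gcongr
  · exact rpow_le_rpow_mul_of_le_rpow hx ha.le hxa hl
  · exact rpow_le_rpow_mul_of_le_rpow hy ha.le hya hk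

lemma le_rpow_of_rpow_mul_rpow_le (hx : 1 ≤ x) (hy : 0 ≤ y) (ha : 0 < a) (hρ : 0 < ρ)
    (hxa : x ≤ a ^ α) (h : x ^ γ * y ^ ρ ≤ a) :
    y ≤ a ^ ((α * |γ| + 1) * ρ⁻¹) := by
  have hx₀ : 0 < x := one_pos.trans_le hx
  rw [Real.rpow_mul ha.le, Real.le_rpow_inv_iff_of_pos hy (by positivity) hρ]
  calc
    y ^ ρ = x ^ (-γ) * (x ^ γ * y ^ ρ) := by
      rw [← mul_assoc, ← Real.rpow_add hx₀, neg_add_cancel, Real.rpow_zero, one_mul]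
    _ ≤ x ^ |γ| * a := by
      gcongr
      exact neg_le_abs γ
    _ ≤ a ^ (α * |γ|) * a := by
      gcongr
      exact rpow_le_rpow_mul_of_le_rpow hx₀.le ha.le hxa (abs_nonneg γ)
    _ = a ^ (α * |γ| + 1) := (Real.rpow_add_one ha.ne' _).symm

end Scalar

section Symbol

variable {E : Type*} [SeminormedAddCommGroup E]

/-- The Japanese bracket `⟨v⟩ = (1 + |v|²)^{1/2}`. -/
noncomputable def japaneseBracket (v : E) : ℝ :=
  √(1 + ‖v‖ ^ 2)

lemma one_le_japaneseBracket (v : E) : 1 ≤ japaneseBracket v :=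
  Real.one_le_sqrt.2 (le_add_of_nonneg_right (sq_nonneg _))

lemma japaneseBracket_pos (v : E) : 0 < japaneseBracket v :=
  one_pos.trans_le (one_le_japaneseBracket v)

lemma japaneseBracket_sq (v : E) : japaneseBracket v ^ 2 = 1 + ‖v‖ ^ 2 :=
  Real.sq_sqrt (by positivity)

lemma japaneseBracket_rpow_two_mul_le {v : E} {s b : ℝ} (hs : 0 ≤ s) (hb : 1 + ‖v‖ ^ 2 ≤ b) :
    japaneseBracket v ^ (2 * s) ≤ b ^ s := by
  rw [Real.rpow_mul (japaneseBracket_pos v).le, Real.rpow_two, japaneseBracket_sq]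
  exact Real.rpow_le_rpow (by positivity) hb hs

variable [InnerProductSpace ℝ E]

/-- The squared norm `|v∧η|² = |v|²|η|² - ⟨v, η⟩²` of the exterior product of two vectors. -/
noncomputable def wedgeNormSq (v η : E) : ℝ :=
  ‖v‖ ^ 2 * ‖η‖ ^ 2 - ⟪v, η⟫ ^ 2

lemma wedgeNormSq_nonneg (v η : E) : 0 ≤ wedgeNormSq v η := by
  rw [wedgeNormSq, sub_nonneg, ← mul_pow, ← sq_abs ⟪v, η⟫]
  gcongr
  exact abs_real_inner_le_norm v η

/-- The weight `a(v, η) = ⟨v⟩^γ (1 + |v|² + |η|² + |v∧η|²)^s + K₀ ⟨v⟩^(γ+2s)` associated to the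
linearized non-cutoff Boltzmann operator. -/
noncomputable def boltzmannSymbol (s γ K₀ : ℝ) (v η : E) : ℝ :=
  japaneseBracket v ^ γ * (1 + ‖v‖ ^ 2 + ‖η‖ ^ 2 + wedgeNormSq v η) ^ s +
    K₀ * japaneseBracket v ^ (γ + 2 * s)

variable {s γ K₀ : ℝ}

lemma japaneseBracket_rpow_mul_rpow_le_boltzmannSymbol_of_le {v η w : E} (hs : 0 ≤ s) (hK₀ : 0 ≤ K₀)
    (hw : 1 + ‖w‖ ^ 2 ≤ 1 + ‖v‖ ^ 2 + ‖η‖ ^ 2 + wedgeNormSq v η) :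
    japaneseBracket v ^ γ * japaneseBracket w ^ (2 * s) ≤ boltzmannSymbol s γ K₀ v η := by
  have hv := japaneseBracket_pos v
  refine le_add_of_le_of_nonneg ?_ (by positivity)
  gcongr
  exact japaneseBracket_rpow_two_mul_le hs hw

lemma japaneseBracket_left_rpow_le_boltzmannSymbol (hs : 0 ≤ s) (hK₀ : 0 ≤ K₀) (v η : E) :
    japaneseBracket v ^ (γ + 2 * s) ≤ boltzmannSymbol s γ K₀ v η := by
  rw [Real.rpow_add (japaneseBracket_pos v)]
  exact japaneseBracket_rpow_mul_rpow_le_boltzmannSymbol_of_le hs hK₀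
    (by linarith [sq_nonneg ‖η‖, wedgeNormSq_nonneg v η])

lemma japaneseBracket_rpow_mul_rpow_le_boltzmannSymbol (hs : 0 ≤ s) (hK₀ : 0 ≤ K₀) (v η : E) :
    japaneseBracket v ^ γ * japaneseBracket η ^ (2 * s) ≤ boltzmannSymbol s γ K₀ v η :=
  japaneseBracket_rpow_mul_rpow_le_boltzmannSymbol_of_le hs hK₀
    (by linarith [sq_nonneg ‖v‖, wedgeNormSq_nonneg v η])

lemma boltzmannSymbol_pos (hs : 0 ≤ s) (hK₀ : 0 ≤ K₀) (v η : E) :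
    0 < boltzmannSymbol s γ K₀ v η :=
  (Real.rpow_pos_of_pos (japaneseBracket_pos v) _).trans_le
    (japaneseBracket_left_rpow_le_boltzmannSymbol hs hK₀ v η)

lemma japaneseBracket_left_le_boltzmannSymbol_rpow (hs : 0 ≤ s) (hγ : 0 < γ + 2 * s)
    (hK₀ : 0 ≤ K₀) (v η : E) :
    japaneseBracket v ≤ boltzmannSymbol s γ K₀ v η ^ (γ + 2 * s)⁻¹ :=
  (Real.le_rpow_inv_iff_of_pos (japaneseBracket_pos v).le (boltzmannSymbol_pos hs hK₀ v η).le
    hγ).2 (japaneseBracket_left_rpow_le_boltzmannSymbol hs hK₀ v η)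

lemma japaneseBracket_right_le_boltzmannSymbol_rpow (hs : 0 < s) (hγ : 0 < γ + 2 * s)
    (hK₀ : 0 ≤ K₀) (v η : E) :
    japaneseBracket η ≤
      boltzmannSymbol s γ K₀ v η ^ (((γ + 2 * s)⁻¹ * |γ| + 1) * (2 * s)⁻¹) :=
  le_rpow_of_rpow_mul_rpow_le (one_le_japaneseBracket v) (japaneseBracket_pos η).le
    (boltzmannSymbol_pos hs.le hK₀ v η) (by positivity)
    (japaneseBracket_left_le_boltzmannSymbol_rpow hs.le hγ hK₀ v η)
    (japaneseBracket_rpow_mul_rpow_le_boltzmannSymbol hs.le hK₀ v η)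

theorem stmt_9_general (hs : 0 < s) (hγ : 0 < γ + 2 * s) (hK₀ : 0 ≤ K₀) {l k : ℝ}
    (hl : 0 ≤ l) (hk : 0 ≤ k) (v η : E) :
    japaneseBracket v ^ l * japaneseBracket η ^ k ≤
      boltzmannSymbol s γ K₀ v η ^
        ((γ + 2 * s)⁻¹ * l + ((γ + 2 * s)⁻¹ * |γ| + 1) * (2 * s)⁻¹ * k) :=
  rpow_mul_rpow_le_rpow_add (japaneseBracket_pos v).le (japaneseBracket_pos η).le
    (boltzmannSymbol_pos hs.le hK₀ v η)
    (japaneseBracket_left_le_boltzmannSymbol_rpow hs.le hγ hK₀ v η)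
    (japaneseBracket_right_le_boltzmannSymbol_rpow hs hγ hK₀ v η) hl hk

end Symbol

/-- Regeneration of polynomial weights by the symbol
`a(v,η) = ⟨v⟩^γ(1+|v|²+|η|²+|v∧η|²)^s + K₀⟨v⟩^{γ+2s}`:
for every `l, k ≥ 0` there is `P ≥ 0` with `⟨v⟩^l⟨η⟩^k ≤ a(v,η)^P`. -/
theorem stmt_9 (s γ K₀ : ℝ) (hs0 : 0 < s) (hs1 : s < 1) (hγ : 0 < γ + 2 * s)
    (hK₀ : 1 ≤ K₀) (d : ℕ) :
    ∀ l k : ℝ, 0 ≤ l → 0 ≤ k → ∃ P : ℝ, 0 ≤ P ∧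
      ∀ v η : EuclideanSpace ℝ (Fin d),
        Real.sqrt (1 + ‖v‖ ^ 2) ^ l * Real.sqrt (1 + ‖η‖ ^ 2) ^ k ≤
          (Real.sqrt (1 + ‖v‖ ^ 2) ^ γ *
              (1 + ‖v‖ ^ 2 + ‖η‖ ^ 2 + (‖v‖ ^ 2 * ‖η‖ ^ 2 - ⟪v, η⟫ ^ 2)) ^ s +
            K₀ * Real.sqrt (1 + ‖v‖ ^ 2) ^ (γ + 2 * s)) ^ P := by
  intro l k hl hk
  exact ⟨_, by positivity, stmt_9_general hs0 hγ (zero_le_one.trans hK₀) hl hk⟩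
end
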